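/- arXiv:1806.03523 — 2 statements merged into one kernel-verified Lean document; each statement's English description precedes it below -/
import Mathlib

section
/- Let a and b be ideals linked by I over M with I generated by an M-regular sequence of length t, and suppose cd(a + b, M) ≥ t + 1. Then cd(a + b, M) = max{cd(a, M), cd(b, M), t + 1}. -/
universe u

open RingTheory.Sequence CategoryTheory

noncomputable section

/-- `N :_M a`, set of `m : M` with `a • m ⊆ N`. -/
def Submodule.modColon {R : Type u} [CommRing R] {M : Type u} [AddCommGroup M] [Module R M]
    (N : Submodule R M) (a : Ideal R) : Submodule R M :=
  ⨅ r ∈ a, N.comap (LinearMap.lsmul R M r)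

/-- The ideals `a` and `b` are linked by `I` over `M`: `I ⊆ a ⊓ b` is generated by an
`M`-regular sequence, `bM = IM :_M a`, `aM = IM :_M b`, and `aM ≠ M ≠ bM`. -/
def Ideal.IsLinkedBy {R : Type u} [CommRing R] (M : Type u) [AddCommGroup M] [Module R M]
    (I a b : Ideal R) : Prop :=
  (∃ rs : List R, RingTheory.Sequence.IsRegular M rs ∧ I = Ideal.ofList rs) ∧
  I ≤ a ⊓ b ∧
  a • (⊤ : Submodule R M) ≠ ⊤ ∧ b • (⊤ : Submodule R M) ≠ ⊤ ∧
  Submodule.modColon (I • (⊤ : Submodule R M)) a = b • (⊤ : Submodule R M) ∧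
  Submodule.modColon (I • (⊤ : Submodule R M)) b = a • (⊤ : Submodule R M)

/-- Cohomological dimension `cd(a, M) = sup { i | H^i_a(M) ≠ 0 }`. -/
def cohDim {R : Type u} [CommRing R] (a : Ideal R) (M : Type u) [AddCommGroup M]
    [Module R M] : ℕ∞ :=
  sSup {n : ℕ∞ | ∃ i : ℕ, n = i ∧ Nontrivial ↥((localCohomology a i).obj (ModuleCat.of R M))}

/-- `grade_M(a)`: the supremum of lengths of `M`-regular sequences contained in `a`. -/
def gradeM {R : Type u} [CommRing R] (a : Ideal R) (M : Type u) [AddCommGroup M]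
    [Module R M] : ℕ :=
  sSup {n : ℕ | ∃ rs : List R, rs.length = n ∧ (∀ r ∈ rs, r ∈ a) ∧
    RingTheory.Sequence.IsRegular M rs}

variable {R : Type u} [CommRing R] [IsNoetherianRing R]
variable {M : Type u} [AddCommGroup M] [Module R M] [Module.Finite R M] [Nontrivial M]

universe w v

/-!
Local cohomology of a module is computed by applying `Γ_J` to the terms of an injective
resolution. On an injective module `E` over a Noetherian ring, `Γ_{a ∩ b}(E) = Γ_a(E) + Γ_b(E)` and
`Γ_{a + b}(E) = Γ_a(E) ∩ Γ_b(E)`, which is the Mayer–Vietoris sequence: in degrees above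
`cd(a ∩ b, M) + 1`, `H_{a + b}` vanishes exactly when both `H_a` and `H_b` do. If `a` and `b` are
linked by `I` over a finitely generated `M`, then `ab` kills `M / IM`, so `a ∩ b` and `I` have the
same radical modulo `ann M` and therefore the same local cohomology of `M`. As `I` is generated
by `t` elements, `cd(a ∩ b, M) ≤ t`.
-/

/-- The submodule `Γ_J(E)` of elements annihilated by a power of `J`, for finitely generated `J`.
Membership is encoded as `J ⊆ √(ann e)`, so that only the radical of `J` visibly matters. -/
def powTorsion {A : Type*} [CommRing A] (J : Ideal A) (E : Type*) [AddCommGroup E] [Module A E] :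
    Submodule A E where
  carrier := {e | J ≤ (Ideal.torsionOf A E e).radical}
  zero_mem' := by simp [Ideal.radical_top]
  add_mem' {e f} he hf := by
    have hle : Ideal.torsionOf A E e ⊓ Ideal.torsionOf A E f ≤ Ideal.torsionOf A E (e + f) := by
      rintro r ⟨hre, hrf⟩
      rw [SetLike.mem_coe, Ideal.mem_torsionOf_iff] at hre hrf
      rw [Ideal.mem_torsionOf_iff, smul_add, hre, hrf, add_zero]
    intro x hx
    exact Ideal.radical_mono hle ((Ideal.radical_inf _ _).ge ⟨he hx, hf hx⟩)
  smul_mem' x e he := by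
    refine le_trans he (Ideal.radical_mono fun r hr => ?_)
    rw [Ideal.mem_torsionOf_iff] at hr ⊢
    rw [smul_comm, hr, smul_zero]

section PowTorsion

variable {A : Type*} [CommRing A] {J K : Ideal A}
  {E F : Type*} [AddCommGroup E] [Module A E] [AddCommGroup F] [Module A F]

lemma mem_powTorsion {e : E} :
    e ∈ powTorsion J E ↔ J ≤ (Ideal.torsionOf A E e).radical :=
  Iff.rfl

lemma powTorsion_anti (h : J ≤ K) : powTorsion K E ≤ powTorsion J E :=
  fun _ he => h.trans he

lemma powTorsion_congr_radical (h : J.radical = K.radical) : powTorsion J E = powTorsion K E :=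
  Submodule.ext fun _ => by
    rw [mem_powTorsion, mem_powTorsion, ← Ideal.radical_le_radical_iff, h,
      Ideal.radical_le_radical_iff]

lemma powTorsion_bot : powTorsion (⊥ : Ideal A) E = ⊤ :=
  eq_top_iff.2 fun _ _ => mem_powTorsion.2 bot_le

lemma powTorsion_sup : powTorsion (J ⊔ K) E = powTorsion J E ⊓ powTorsion K E :=
  Submodule.ext fun _ => sup_le_iff (α := Ideal A)

lemma map_mem_powTorsion (f : E →ₗ[A] F) {e : E} (he : e ∈ powTorsion J E) :
    f e ∈ powTorsion J F := by
  refine he.trans (Ideal.radical_mono fun r hr => ?_)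
  rw [Ideal.mem_torsionOf_iff] at hr ⊢
  rw [← map_smul, hr, map_zero]

lemma coe_mem_powTorsion {N : Submodule A E} {e : N} :
    (e : E) ∈ powTorsion J E ↔ e ∈ powTorsion J N := by
  have : Ideal.torsionOf A E e = Ideal.torsionOf A N e := by
    ext r
    simp only [Ideal.mem_torsionOf_iff, ← Submodule.coe_smul, ZeroMemClass.coe_eq_zero]
  rw [mem_powTorsion, mem_powTorsion, this]

lemma mem_powTorsion_span_singleton {x : A} {e : E} :
    e ∈ powTorsion (Ideal.span {x}) E ↔ ∃ n : ℕ, x ^ n • e = 0 := by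
  simp only [mem_powTorsion, Ideal.span_singleton_le_iff_mem, Ideal.mem_radical_iff,
    Ideal.mem_torsionOf_iff]

lemma mem_powTorsion_span_singleton_of_pow_smul {x : A} {n : ℕ} {e : E}
    (h : x ^ n • e ∈ powTorsion (Ideal.span {x}) E) : e ∈ powTorsion (Ideal.span {x}) E := by
  obtain ⟨m, hm⟩ := mem_powTorsion_span_singleton.1 h
  exact mem_powTorsion_span_singleton.2 ⟨m + n, by rw [pow_add, mul_smul, hm]⟩

lemma map_quotient_pow_mem_powTorsion {n : ℕ} (f : (A ⧸ J ^ n) →ₗ[A] E) (q : A ⧸ J ^ n) :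
    f q ∈ powTorsion J E := by
  refine map_mem_powTorsion f fun x hx => ⟨n, (Ideal.mem_torsionOf_iff _ _).2 ?_⟩
  exact Module.mem_annihilator.1
    (by simpa [Ideal.annihilator_quotient] using Ideal.pow_mem_pow hx n) q

lemma le_radical_annihilator {N : Submodule A E} (hN : N.FG) (h : N ≤ powTorsion J E) :
    J ≤ N.annihilator.radical := by
  revert h
  refine Submodule.fg_induction (motive := fun N _ =>
    N ≤ powTorsion J E → J ≤ N.annihilator.radical)
    (fun e he => ?_) (fun P Q _ _ hP hQ h => ?_) N hN
  · have := he (Submodule.mem_span_singleton_self e)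
    rwa [mem_powTorsion, show Ideal.torsionOf A E e = (A ∙ e).annihilator by
      ext; rw [Ideal.mem_torsionOf_iff, Submodule.mem_annihilator_span_singleton]] at this
  · rw [Submodule.annihilator_sup, Ideal.radical_inf]
    exact le_inf (hP (le_sup_left.trans h)) (hQ (le_sup_right.trans h))

lemma exists_pow_le_annihilator (hJ : J.FG) {N : Submodule A E} (hN : N.FG)
    (h : N ≤ powTorsion J E) : ∃ n : ℕ, J ^ n ≤ N.annihilator :=
  Ideal.exists_pow_le_of_le_radical_of_fg (le_radical_annihilator hN h) hJ

end PowTorsion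

section Baer

variable {A : Type*} [CommRing A] {E : Type*} [AddCommGroup E] [Module A E]

lemma exists_comp_eq_of_ker_le (hE : Module.Baer A E) {P Q : Type*} [AddCommGroup P] [Module A P]
    [AddCommGroup Q] [Module A Q] (p : P →ₗ[A] Q) (φ : P →ₗ[A] E)
    (h : LinearMap.ker p ≤ LinearMap.ker φ) : ∃ ψ : Q →ₗ[A] E, ψ ∘ₗ p = φ := by
  obtain ⟨ψ, hψ⟩ := Module.Baer.extension_property hE ((LinearMap.ker p).liftQ p le_rfl)
    (LinearMap.ker_eq_bot.1 (Submodule.ker_liftQ_eq_bot _ _ _ le_rfl))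
    ((LinearMap.ker p).liftQ φ h)
  exact ⟨ψ, LinearMap.ext fun a => LinearMap.congr_fun hψ (Submodule.Quotient.mk a)⟩

variable [IsNoetherianRing A]

lemma exists_pow_smul_of_mul_pow_eq_zero (x : A) :
    ∃ m : ℕ, ∀ n : ℕ, ∀ r : A, x ^ (m + n) * r = 0 → x ^ m * r = 0 := by
  obtain ⟨m, hm⟩ := monotone_stabilizes_iff_noetherian.2 ‹IsNoetherianRing A›
    (LinearMap.iterateKer (LinearMap.mulLeft A x))
  refine ⟨m, fun n r hr => ?_⟩
  have := hm (m + n) (m.le_add_right n)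
  simp only [LinearMap.iterateKer, OrderHom.coe_mk, LinearMap.pow_mulLeft] at this
  exact this.ge hr

lemma exists_sub_pow_smul_mem_powTorsion (hE : Module.Baer A E) (x : A) (n : ℕ) (g : E) :
    ∃ h : E, g - x ^ n • h ∈ powTorsion (Ideal.span {x}) E := by
  obtain ⟨m, hm⟩ := exists_pow_smul_of_mul_pow_eq_zero x
  obtain ⟨ψ, hψ⟩ := exists_comp_eq_of_ker_le hE (LinearMap.mulLeft A (x ^ (m + n)))
    (LinearMap.toSpanSingleton A E (x ^ m • g)) fun r hr => by
      simpa [smul_smul, mul_comm r] using congrArg (· • g) (hm n r hr)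
  have hψ1 : x ^ (m + n) • ψ 1 = x ^ m • g := by
    simpa [← map_smul] using LinearMap.congr_fun hψ 1
  exact ⟨ψ 1, mem_powTorsion_span_singleton.2
    ⟨m, by rw [smul_sub, smul_smul, ← pow_add, hψ1, sub_self]⟩⟩

lemma exists_pow_inf_le_pow_mul (J I : Ideal A) (n : ℕ) : ∃ m : ℕ, J ^ m ⊓ I ≤ J ^ n * I := by
  obtain ⟨k, hk⟩ := Ideal.exists_pow_inf_eq_pow_smul J (M := A) I
  refine ⟨n + k, ?_⟩
  have h := hk (n + k) (k.le_add_left n)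
  rw [Ideal.smul_top_eq_map, Algebra.algebraMap_self, Ideal.map_id, n.add_sub_cancel] at h
  exact h.le.trans (Ideal.mul_mono_right inf_le_right)

lemma exists_pow_inf_pow_le_inf_pow (a b : Ideal A) (n : ℕ) :
    ∃ m : ℕ, a ^ m ⊓ b ^ m ≤ (a ⊓ b) ^ n := by
  obtain ⟨k, hk⟩ := exists_pow_inf_le_pow_mul a (b ^ n) n
  refine ⟨max k n, ?_⟩
  calc a ^ max k n ⊓ b ^ max k n ≤ a ^ k ⊓ b ^ n :=
        inf_le_inf (Ideal.pow_le_pow_right (le_max_left k n))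
          (Ideal.pow_le_pow_right (le_max_right k n))
    _ ≤ (a * b) ^ n := hk.trans (mul_pow a b n).ge
    _ ≤ (a ⊓ b) ^ n := Ideal.pow_right_mono Ideal.mul_le_inf n

-- By Artin–Rees, a map from an ideal `I` to `Γ_J(E)` factors through the image of `I` in some
-- `A ⧸ J ^ m`.
lemma baer_powTorsion (hE : Module.Baer A E) (J : Ideal A) : Module.Baer A (powTorsion J E) := by
  intro I g
  obtain ⟨k, hk⟩ := exists_pow_le_annihilator (IsNoetherian.noetherian J)
    (N := LinearMap.range g) (Module.Finite.iff_fg.1 inferInstance)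
    fun e _ => coe_mem_powTorsion.1 e.2
  obtain ⟨m, hm⟩ := exists_pow_inf_le_pow_mul J I k
  have hsmul : J ^ k • (⊤ : Submodule A I) ≤ LinearMap.ker g :=
    Submodule.smul_le.2 fun s hs r _ => by
      rw [LinearMap.mem_ker, map_smul]
      exact Submodule.mem_annihilator.1 (hk hs) _ ⟨r, rfl⟩
  have hker : LinearMap.ker ((J ^ m).mkQ ∘ₗ I.subtype) ≤
      LinearMap.ker ((powTorsion J E).subtype ∘ₗ g) := fun r hr => by
    have hrm : (r : A) ∈ J ^ m := Ideal.Quotient.eq_zero_iff_mem.1 hr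
    have hrg : r ∈ LinearMap.ker g :=
      hsmul ((Submodule.mem_smul_top_iff _ _ _).2 (hm ⟨hrm, r.2⟩))
    rw [LinearMap.mem_ker, LinearMap.comp_apply, LinearMap.mem_ker.1 hrg, map_zero]
  obtain ⟨ψ, hψ⟩ := exists_comp_eq_of_ker_le hE _ _ hker
  exact ⟨(ψ ∘ₗ (J ^ m).mkQ).codRestrict _ fun r => map_quotient_pow_mem_powTorsion ψ _,
    fun r hr => Subtype.ext (LinearMap.congr_fun hψ ⟨r, hr⟩)⟩

lemma powTorsion_inf (hE : Module.Baer A E) (a b : Ideal A) :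
    powTorsion (a ⊓ b) E = powTorsion a E ⊔ powTorsion b E := by
  refine le_antisymm (fun e he => ?_)
    (sup_le (powTorsion_anti inf_le_left) (powTorsion_anti inf_le_right))
  obtain ⟨k, hk⟩ := Ideal.exists_pow_le_of_le_radical_of_fg he (IsNoetherian.noetherian _)
  obtain ⟨m, hm⟩ := exists_pow_inf_pow_le_inf_pow a b k
  obtain ⟨ψ, hψ⟩ := exists_comp_eq_of_ker_le hE ((a ^ m).mkQ.prod (b ^ m).mkQ)
    (LinearMap.toSpanSingleton A E e) (by
      rw [LinearMap.ker_prod, Submodule.ker_mkQ, Submodule.ker_mkQ]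
      exact hm.trans hk)
  refine Submodule.mem_sup.2 ⟨ψ ((a ^ m).mkQ 1, 0),
    map_quotient_pow_mem_powTorsion (ψ ∘ₗ LinearMap.inl A _ _) _, ψ (0, (b ^ m).mkQ 1),
    map_quotient_pow_mem_powTorsion (ψ ∘ₗ LinearMap.inr A _ _) _, ?_⟩
  rw [← map_add]
  simpa using LinearMap.congr_fun hψ 1

end Baer

/-- Exactness in the middle of `Γ_J(E) → Γ_J(F) → Γ_J(G)` for a complex `E → F → G` with
differentials `f` and `g`: for three consecutive terms of an injective resolution of `M` it
expresses the vanishing of a local cohomology module of `M`. -/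
def PowTorsionExact {A : Type*} [CommRing A] (J : Ideal A) {E F G : Type*}
    [AddCommGroup E] [Module A E] [AddCommGroup F] [Module A F] [AddCommGroup G] [Module A G]
    (f : E →ₗ[A] F) (g : F →ₗ[A] G) : Prop :=
  ∀ z ∈ powTorsion J F, g z = 0 → ∃ y ∈ powTorsion J E, f y = z

/-- Exactness of `Γ_J(E) → Γ_J(F) → Γ_J(G)` in the middle after inverting `x`: a multiple by a power
of `x` of each cycle is a boundary. It is used to pass from `J` to `J + (x)` and back. -/
def PowTorsionExactAway {A : Type*} [CommRing A] (J : Ideal A) (x : A) {E F G : Type*}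
    [AddCommGroup E] [Module A E] [AddCommGroup F] [Module A F] [AddCommGroup G] [Module A G]
    (f : E →ₗ[A] F) (g : F →ₗ[A] G) : Prop :=
  ∀ z ∈ powTorsion J F, g z = 0 → ∃ n : ℕ, ∃ y ∈ powTorsion J E, f y = x ^ n • z

section Exactness

variable {A : Type*} [CommRing A] {J : Ideal A} {x : A} {D E F G : Type*}
  [AddCommGroup D] [Module A D] [AddCommGroup E] [Module A E]
  [AddCommGroup F] [Module A F] [AddCommGroup G] [Module A G]
  {d : D →ₗ[A] E} {f : E →ₗ[A] F} {g : F →ₗ[A] G}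

lemma powTorsionExact_congr_radical {K : Ideal A} (h : J.radical = K.radical) :
    PowTorsionExact J f g ↔ PowTorsionExact K f g := by
  simp only [PowTorsionExact, powTorsion_congr_radical h]

lemma powTorsionExact_bot (h : Function.Exact f g) : PowTorsionExact (⊥ : Ideal A) f g :=
  fun z _ hz => ((h z).1 hz).imp fun y hy => ⟨by simp [powTorsion_bot], hy⟩

lemma PowTorsionExact.away (h : PowTorsionExact J f g) (x : A) : PowTorsionExactAway J x f g :=
  fun z hz hgz => ⟨0, by simpa using h z hz hgz⟩

lemma powTorsionExactAway_of_smul_eq {h : F →ₗ[A] E} {h' : G →ₗ[A] F}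
    (hx : ∀ z, x • z = f (h z) + h' (g z)) : PowTorsionExactAway J x f g := fun z hz hgz =>
  ⟨1, h z, map_mem_powTorsion h hz, by rw [pow_one, hx, hgz, map_zero, add_zero]⟩

variable [IsNoetherianRing A]

lemma exists_sub_map_mem_powTorsion (hE : Module.Baer A E) {y : E} (hy : y ∈ powTorsion J E)
    {z : F} {n : ℕ} (hyz : f y = x ^ n • z) :
    ∃ c ∈ powTorsion J E, z - f c ∈ powTorsion (Ideal.span {x}) F := by
  obtain ⟨⟨c, hc⟩, hyc⟩ := exists_sub_pow_smul_mem_powTorsion (baer_powTorsion hE J) x n ⟨y, hy⟩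
  have hyc' : y - x ^ n • c ∈ powTorsion (Ideal.span {x}) E := by
    simpa only [Submodule.coe_sub, Submodule.coe_smul] using coe_mem_powTorsion.2 hyc
  refine ⟨c, hc, mem_powTorsion_span_singleton_of_pow_smul (n := n) ?_⟩
  rw [smul_sub, ← hyz, ← map_smul, ← map_sub]
  exact map_mem_powTorsion f hyc'

lemma PowTorsionExact.sup_span (hD : Module.Baer A D) (hfd : ∀ y, f (d y) = 0)
    (hA : PowTorsionExactAway J x d f) (hE : PowTorsionExact J f g) :
    PowTorsionExact (J ⊔ Ideal.span {x}) f g := by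
  intro z hz hgz
  rw [powTorsion_sup] at hz ⊢
  obtain ⟨y, hy, rfl⟩ := hE z hz.1 hgz
  obtain ⟨n, hn⟩ := mem_powTorsion_span_singleton.1 hz.2
  obtain ⟨m, w, hw, hwy⟩ := hA (x ^ n • y) (Submodule.smul_mem _ _ hy) (by rw [map_smul, hn])
  rw [smul_smul, ← pow_add] at hwy
  obtain ⟨c, hc, hyc⟩ := exists_sub_map_mem_powTorsion hD hw hwy
  exact ⟨y - d c, ⟨sub_mem hy (map_mem_powTorsion d hc), hyc⟩, by rw [map_sub, hfd, sub_zero]⟩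

lemma PowTorsionExact.of_sup_span (hE : Module.Baer A E) (hgf : ∀ y, g (f y) = 0)
    (hA : PowTorsionExactAway J x f g) (h : PowTorsionExact (J ⊔ Ideal.span {x}) f g) :
    PowTorsionExact J f g := by
  intro z hz hgz
  obtain ⟨n, y, hy, hyz⟩ := hA z hz hgz
  obtain ⟨c, hc, hzc⟩ := exists_sub_map_mem_powTorsion hE hy hyz
  obtain ⟨w, hw, hwz⟩ := h (z - f c)
    (powTorsion_sup.ge ⟨sub_mem hz (map_mem_powTorsion f hc), hzc⟩)
    (by rw [map_sub, hgz, hgf, sub_zero])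
  exact ⟨w + c, add_mem (powTorsion_anti le_sup_left hw) hc, by rw [map_add, hwz, sub_add_cancel]⟩

variable {a b : Ideal A}

lemma PowTorsionExact.of_inf_of_sup (hE : Module.Baer A E) (hgf : ∀ y, g (f y) = 0)
    (hinf : PowTorsionExact (a ⊓ b) f g) (hsup : PowTorsionExact (a ⊔ b) f g) :
    PowTorsionExact a f g := by
  intro z hz hgz
  obtain ⟨y, hy, rfl⟩ := hinf z (powTorsion_anti inf_le_left hz) hgz
  obtain ⟨u, hu, v, hv, rfl⟩ := Submodule.mem_sup.1 ((powTorsion_inf hE a b).le hy)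
  have hfv : f v ∈ powTorsion a F := by
    simpa using sub_mem hz (map_mem_powTorsion f hu)
  obtain ⟨w, hw, hwv⟩ := hsup (f v)
    (powTorsion_sup.ge ⟨hfv, map_mem_powTorsion f hv⟩) (hgf v)
  exact ⟨u + w, add_mem hu (powTorsion_anti le_sup_left hw), by rw [map_add, map_add, hwv]⟩

lemma PowTorsionExact.sup_of_inf (hD : Module.Baer A D) (hfd : ∀ y, f (d y) = 0)
    (hinf : PowTorsionExact (a ⊓ b) d f) (ha : PowTorsionExact a f g)
    (hb : PowTorsionExact b f g) : PowTorsionExact (a ⊔ b) f g := by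
  intro z hz hgz
  rw [powTorsion_sup] at hz ⊢
  obtain ⟨y, hy, hyz⟩ := ha z hz.1 hgz
  obtain ⟨y', hy', hyz'⟩ := hb z hz.2 hgz
  obtain ⟨w, hw, hwy⟩ := hinf (y - y')
    (sub_mem (powTorsion_anti inf_le_left hy) (powTorsion_anti inf_le_right hy'))
    (by rw [map_sub, hyz, hyz', sub_self])
  obtain ⟨u, hu, v, hv, rfl⟩ := Submodule.mem_sup.1 ((powTorsion_inf hD a b).le hw)
  have hyu : y - d u = y' + d v := by
    rw [map_add] at hwy
    rw [sub_eq_iff_eq_add, add_assoc, add_comm (d v), hwy, add_sub_cancel]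
  refine ⟨y - d u, ⟨sub_mem hy (map_mem_powTorsion d hu), ?_⟩, by rw [map_sub, hfd, hyz, sub_zero]⟩
  exact hyu ▸ add_mem hy' (map_mem_powTorsion d hv)

lemma powTorsionExact_sup_iff (hD : Module.Baer A D) (hE : Module.Baer A E)
    (hfd : ∀ y, f (d y) = 0) (hgf : ∀ y, g (f y) = 0)
    (hdf : PowTorsionExact (a ⊓ b) d f) (hfg : PowTorsionExact (a ⊓ b) f g) :
    PowTorsionExact (a ⊔ b) f g ↔ PowTorsionExact a f g ∧ PowTorsionExact b f g :=
  ⟨fun h => ⟨.of_inf_of_sup hE hgf hfg h,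
    .of_inf_of_sup hE hgf (inf_comm a b ▸ hfg) (sup_comm a b ▸ h)⟩,
    fun h => .sup_of_inf hD hfd hdf h.1 h.2⟩

end Exactness

section Complex

variable {A : Type*} [CommRing A]

lemma powTorsionExactAway_of_homotopy {ι : Type*} {c : ComplexShape ι}
    {K : HomologicalComplex (ModuleCat A) c} {x : A} (h : Homotopy (x • 𝟙 K) 0) (J : Ideal A)
    {i j k : ι} (hi : c.prev j = i) (hk : c.next j = k) :
    PowTorsionExactAway J x (K.d i j).hom (K.d j k).hom := by
  subst hi hk
  refine powTorsionExactAway_of_smul_eq (h := (h.hom j (c.prev j)).hom)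
    (h' := (h.hom (c.next j) j).hom) fun z => ?_
  have hcomm : x • 𝟙 (K.X j) = K.d j (c.next j) ≫ h.hom (c.next j) j +
      h.hom j (c.prev j) ≫ K.d (c.prev j) j + 0 := h.comm j
  simpa [add_comm] using congrArg (fun φ => φ.hom z) hcomm

end Complex

section InjectiveResolution

variable {A : Type u} [CommRing A] {Y : ModuleCat.{u} A} (Q : InjectiveResolution Y)

lemma baer_injectiveResolution (i : ℕ) : Module.Baer A (Q.cocomplex.X i) :=
  Module.Baer.of_injective ((Module.injective_iff_injective_object A _).2 (Q.injective i))

lemma injectiveResolution_d_d (i j k : ℕ) (y : Q.cocomplex.X i) :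
    (Q.cocomplex.d j k).hom ((Q.cocomplex.d i j).hom y) = 0 := by
  rw [← ModuleCat.comp_apply, Q.cocomplex.d_comp_d]
  rfl

variable [IsNoetherianRing A]

lemma powTorsionExact_ofList (rs : List A) {i : ℕ} (hi : rs.length ≤ i) :
    PowTorsionExact (Ideal.ofList rs) (Q.cocomplex.d i (i + 1)).hom
      (Q.cocomplex.d (i + 1) (i + 2)).hom := by
  induction rs generalizing i with
  | nil =>
    rw [Ideal.ofList_nil]
    exact powTorsionExact_bot
      ((ShortComplex.ShortExact.moduleCat_exact_iff_function_exact _).1 (Q.exact_succ i))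
  | cons x rs ih =>
    obtain ⟨i, rfl⟩ : ∃ j, i = j + 1 := Nat.exists_eq_succ_of_ne_zero (by rintro rfl; simp at hi)
    rw [List.length_cons, Nat.add_le_add_iff_right] at hi
    rw [Ideal.ofList_cons, sup_comm]
    exact .sup_span (baer_injectiveResolution Q i) (injectiveResolution_d_d Q _ _ _)
      ((ih hi).away x) (ih (hi.trans i.le_succ))

lemma powTorsionExact_sup_span_iff_of_mem_annihilator {x : A} (hx : x ∈ Module.annihilator A Y)
    (J : Ideal A) (i : ℕ) :
    PowTorsionExact (J ⊔ Ideal.span {x}) (Q.cocomplex.d i (i + 1)).hom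
      (Q.cocomplex.d (i + 1) (i + 2)).hom ↔
    PowTorsionExact J (Q.cocomplex.d i (i + 1)).hom (Q.cocomplex.d (i + 1) (i + 2)).hom := by
  have hQι : Q.ι ≫ (x • 𝟙 Q.cocomplex) = 0 :=
    HomologicalComplex.from_single_hom_ext <| ModuleCat.hom_ext <| LinearMap.ext fun y => by
      have hy : x • (y : Y) = 0 := Module.mem_annihilator.1 hx y
      rw [Linear.comp_smul, Category.comp_id]
      exact (((Q.ι.f 0).hom).map_smul x y).symm.trans ((congrArg _ hy).trans (map_zero _))
  have hhom : Homotopy (x • 𝟙 Q.cocomplex) 0 :=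
    InjectiveResolution.descHomotopyZero _ hQι
  have haway (j : ℕ) : PowTorsionExactAway J x
      (Q.cocomplex.d ((ComplexShape.up ℕ).prev j) j).hom (Q.cocomplex.d j (j + 1)).hom :=
    powTorsionExactAway_of_homotopy hhom J rfl (CochainComplex.next ℕ j)
  have haway' : PowTorsionExactAway J x
      (Q.cocomplex.d i (i + 1)).hom (Q.cocomplex.d (i + 1) (i + 2)).hom :=
    powTorsionExactAway_of_homotopy hhom J (CochainComplex.prev_nat_succ i)
      (CochainComplex.next ℕ (i + 1))
  exact ⟨.of_sup_span (baer_injectiveResolution Q i) (injectiveResolution_d_d Q _ _ _) haway',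
    .sup_span (baer_injectiveResolution Q _) (injectiveResolution_d_d Q _ _ _) (haway i)⟩

lemma powTorsionExact_sup_iff_of_le_annihilator {I : Ideal A} (hI : I ≤ Module.annihilator A Y)
    (J : Ideal A) (i : ℕ) :
    PowTorsionExact (J ⊔ I) (Q.cocomplex.d i (i + 1)).hom (Q.cocomplex.d (i + 1) (i + 2)).hom ↔
    PowTorsionExact J (Q.cocomplex.d i (i + 1)).hom (Q.cocomplex.d (i + 1) (i + 2)).hom := by
  revert hI J
  refine Submodule.fg_induction (motive := fun I _ => I ≤ Module.annihilator A Y → ∀ J : Ideal A,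
    PowTorsionExact (J ⊔ I) (Q.cocomplex.d i (i + 1)).hom (Q.cocomplex.d (i + 1) (i + 2)).hom ↔
    PowTorsionExact J (Q.cocomplex.d i (i + 1)).hom (Q.cocomplex.d (i + 1) (i + 2)).hom)
    (fun x hx J => ?_) (fun I I' _ _ hI hI' h J => ?_) I (IsNoetherian.noetherian I)
  · exact powTorsionExact_sup_span_iff_of_mem_annihilator Q
      (hx (Submodule.mem_span_singleton_self x)) J i
  · rw [← sup_assoc, hI' (le_sup_right.trans h), hI (le_sup_left.trans h)]

end InjectiveResolution

section CohomologyClass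

variable {A : Type*} [Ring A]

/-- `z` is a cocycle of the cohomology class `h` in the cochain complex of modules opposite to `K`.
The class lives in the opposite category because this is how the functor `Ext` is defined: its
values are homology objects of chain complexes in the opposite of the category of modules. -/
def RepresentsClass (K : ChainComplex (ModuleCat.{v} A)ᵒᵖ ℕ) (n : ℕ) (z : (K.X n).unop)
    (h : (K.homology n).unop) : Prop :=
  ∃ c : (K.opcycles n).unop, (K.pOpcycles n).unop c = z ∧ (K.homologyι n).unop c = h

variable {K L : ChainComplex (ModuleCat.{v} A)ᵒᵖ ℕ} {n : ℕ}

lemma exists_representsClass (h : (K.homology n).unop) : ∃ z, RepresentsClass K n z h := by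
  obtain ⟨c, hc⟩ := (ModuleCat.epi_iff_surjective (K.homologyι n).unop).1 inferInstance h
  exact ⟨_, c, rfl, hc⟩

lemma RepresentsClass.d_eq_zero {z : (K.X n).unop} {h : (K.homology n).unop}
    (hz : RepresentsClass K n z h) : (K.d (n + 1) n).unop z = 0 := by
  obtain ⟨c, rfl, -⟩ := hz
  have hpd : (K.pOpcycles n).unop ≫ (K.d (n + 1) n).unop = 0 := by
    rw [← unop_comp, K.d_pOpcycles, Limits.unop_zero]
  exact congr($hpd c)

lemma exists_representsClass_of_d_eq_zero {z : (K.X n).unop} (hz : (K.d (n + 1) n).unop z = 0) :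
    ∃ h, RepresentsClass K n z h := by
  let ι : ModuleCat.of A (LinearMap.ker (K.d (n + 1) n).unop.hom) ⟶ (K.X n).unop :=
    ModuleCat.ofHom (Submodule.subtype _)
  have hι : ι ≫ (K.d (n + 1) n).unop = 0 := ModuleCat.hom_ext (LinearMap.ext Subtype.property)
  have hι' : K.d (n + 1) n ≫ ι.op = 0 := congr($(hι).op)
  let φ := K.descOpcycles ι.op (n + 1) (by simp) hι'
  have hφ : φ.unop ≫ (K.pOpcycles n).unop = ι := by
    rw [← unop_comp, K.p_descOpcycles]
    rfl
  exact ⟨_, φ.unop ⟨z, hz⟩, congr($hφ ⟨z, hz⟩), rfl⟩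

lemma RepresentsClass.eq_zero_iff {z : (K.X (n + 1)).unop} {h : (K.homology (n + 1)).unop}
    (hz : RepresentsClass K (n + 1) z h) : h = 0 ↔ ∃ w, (K.d (n + 1) n).unop w = z := by
  obtain ⟨c, rfl, rfl⟩ := hz
  have hp : Function.Injective (K.pOpcycles (n + 1)).unop :=
    (ModuleCat.mono_iff_injective _).1 inferInstance
  have hd : (K.fromOpcycles (n + 1) n).unop ≫ (K.pOpcycles (n + 1)).unop =
      (K.d (n + 1) n).unop := by rw [← unop_comp, K.p_fromOpcycles]
  have hexact : (ShortComplex.mk _ _ (K.homologyι_comp_fromOpcycles (n + 1) n)).Exact :=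
    ShortComplex.exact_of_f_is_kernel _ (K.homologyIsKernel (n + 1) n (by simp))
  constructor
  · intro hc
    obtain ⟨w, hw⟩ := (ShortComplex.moduleCat_exact_iff _).1 hexact.unop c hc
    exact ⟨w, by rw [← hd, ← hw]; rfl⟩
  · rintro ⟨w, hw⟩
    have hcw : c = (K.fromOpcycles (n + 1) n).unop w := hp (by rw [← hw, ← hd]; rfl)
    have hι : (K.fromOpcycles (n + 1) n).unop ≫ (K.homologyι (n + 1)).unop = 0 := by
      rw [← unop_comp, K.homologyι_comp_fromOpcycles, Limits.unop_zero]
    rw [hcw]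
    exact congr($hι w)

lemma RepresentsClass.map {z : (K.X n).unop} {h : (K.homology n).unop}
    (hz : RepresentsClass K n z h) (φ : L ⟶ K) :
    RepresentsClass L n ((φ.f n).unop z) ((HomologicalComplex.homologyMap φ n).unop h) := by
  obtain ⟨c, rfl, rfl⟩ := hz
  exact ⟨(HomologicalComplex.opcyclesMap φ n).unop c,
    congr(($(HomologicalComplex.p_opcyclesMap φ n).unop) c),
    congr(($(HomologicalComplex.homologyι_naturality φ n).unop) c).symm⟩

end CohomologyClass

section ExtClass

lemma mk₀_comp_injectiveResolution_extMk_eq_zero_iff {C : Type*} [Category.{v} C]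
    [Abelian C] [HasExt.{w} C] {X X' Y : C} {n : ℕ} (Q : InjectiveResolution Y)
    {f : X ⟶ Q.cocomplex.X (n + 1)} (hf : f ≫ Q.cocomplex.d (n + 1) (n + 2) = 0) (g : X' ⟶ X) :
    (Abelian.Ext.mk₀ g).comp (Q.extMk f (n + 2) rfl hf) (zero_add _) = 0 ↔
      ∃ k : X' ⟶ Q.cocomplex.X n, k ≫ Q.cocomplex.d n (n + 1) = g ≫ f := by
  rw [InjectiveResolution.mk₀_comp_extMk, InjectiveResolution.extMk_eq_zero_iff _ _ _ _ _ n rfl]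

variable {A : Type*} [Ring A] {C : Type*} [Category.{v} C] [Abelian C] [Linear A C]
  [EnoughProjectives C] {X X' Y : C} {n : ℕ}

/-- The cocycle `f` on the projective resolution `P` of `X` represents the class `α` in the module
`Ext A C n`, defined by left deriving `X ↦ (X ⟶ Y)`. -/
def RepresentsExt (P : ProjectiveResolution X) (f : P.complex.X n ⟶ Y)
    (α : ((Ext A C n).obj (Opposite.op X)).obj Y) : Prop :=
  RepresentsClass ((((linearYoneda A C).obj Y).rightOp.mapHomologicalComplex _).obj P.complex) n f
    ((P.isoLeftDerivedObj ((linearYoneda A C).obj Y).rightOp n).inv.unop α)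

variable (P : ProjectiveResolution X)

lemma exists_representsExt (α : ((Ext A C n).obj (Opposite.op X)).obj Y) :
    ∃ f : P.complex.X n ⟶ Y, P.complex.d (n + 1) n ≫ f = 0 ∧ RepresentsExt P f α :=
  have ⟨f, hf⟩ := exists_representsClass
    ((P.isoLeftDerivedObj ((linearYoneda A C).obj Y).rightOp n).inv.unop α)
  ⟨f, hf.d_eq_zero, hf⟩

variable {P}

lemma exists_representsExt_of_d_comp_eq_zero {f : P.complex.X n ⟶ Y}
    (hf : P.complex.d (n + 1) n ≫ f = 0) :
    ∃ α : ((Ext A C n).obj (Opposite.op X)).obj Y, RepresentsExt P f α := by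
  let e := P.isoLeftDerivedObj ((linearYoneda A C).obj Y).rightOp n
  obtain ⟨h, hh⟩ := exists_representsClass_of_d_eq_zero (K := (((linearYoneda A C).obj
    Y).rightOp.mapHomologicalComplex _).obj P.complex) (n := n) (z := f) hf
  obtain ⟨α, rfl⟩ := (ModuleCat.epi_iff_surjective e.inv.unop).1 inferInstance h
  exact ⟨α, hh⟩

lemma RepresentsExt.eq_zero_iff {f : P.complex.X (n + 1) ⟶ Y}
    {α : ((Ext A C (n + 1)).obj (Opposite.op X)).obj Y} (hf : RepresentsExt P f α) :
    α = 0 ↔ ∃ g : P.complex.X n ⟶ Y, P.complex.d (n + 1) n ≫ g = f := by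
  let e := P.isoLeftDerivedObj ((linearYoneda A C).obj Y).rightOp (n + 1)
  have he : Function.Injective e.inv.unop := (ModuleCat.mono_iff_injective _).1 inferInstance
  exact (map_eq_zero_iff e.inv.unop.hom he).symm.trans (RepresentsClass.eq_zero_iff hf)

lemma RepresentsExt.map {f : P.complex.X n ⟶ Y} {α : ((Ext A C n).obj (Opposite.op X)).obj Y}
    (hf : RepresentsExt P f α) {P' : ProjectiveResolution X'} {g : X' ⟶ X}
    (φ : ProjectiveResolution.Hom P' P g) :
    RepresentsExt P' (φ.hom.f n ≫ f) (((Ext A C n).map g.op).app Y α) := by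
  have hnat := ProjectiveResolution.isoLeftDerivedObj_inv_naturality g P' P φ.hom
    (by simpa using φ.hom_f_zero_comp_π_f_zero) ((linearYoneda A C).obj Y).rightOp n
  have hα : (P'.isoLeftDerivedObj ((linearYoneda A C).obj Y).rightOp n).inv.unop
      (((Ext A C n).map g.op).app Y α) = _ := congr(($(hnat).unop) α)
  rw [RepresentsExt, hα]
  exact RepresentsClass.map hf
    ((((linearYoneda A C).obj Y).rightOp.mapHomologicalComplex _).map φ.hom)

variable [HasExt.{w} C]

lemma RepresentsExt.map_eq_zero_iff {f : P.complex.X (n + 1) ⟶ Y}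
    (hd : P.complex.d (n + 2) (n + 1) ≫ f = 0)
    {α : ((Ext A C (n + 1)).obj (Opposite.op X)).obj Y} (hf : RepresentsExt P f α) (g : X' ⟶ X) :
    ((Ext A C (n + 1)).map g.op).app Y α = 0 ↔
      (Abelian.Ext.mk₀ g).comp (P.extMk f (n + 2) rfl hd) (zero_add _) = 0 := by
  let P' := projectiveResolution X'
  let φ : ProjectiveResolution.Hom P' P g :=
    ⟨_, HomologicalComplex.congr_hom (ProjectiveResolution.lift_commutes g P' P) 0⟩
  rw [ProjectiveResolution.mk₀_comp_extMk f _ rfl hd φ,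
    ProjectiveResolution.extMk_eq_zero_iff _ _ _ _ _ n rfl]
  exact (hf.map φ).eq_zero_iff

lemma forall_exists_ext_map_eq_zero_iff (Q : InjectiveResolution Y) {ι : Type*} {B : ι → C}
    (g : ∀ j, B j ⟶ X) :
    (∀ α : ((Ext A C (n + 1)).obj (Opposite.op X)).obj Y, ∃ j,
      ((Ext A C (n + 1)).map (g j).op).app Y α = 0) ↔
    ∀ f : X ⟶ Q.cocomplex.X (n + 1), f ≫ Q.cocomplex.d (n + 1) (n + 2) = 0 →
      ∃ j, ∃ k : B j ⟶ Q.cocomplex.X n, k ≫ Q.cocomplex.d n (n + 1) = g j ≫ f := by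
  let P := projectiveResolution X
  constructor
  · intro H f hf
    obtain ⟨p, hp, hpf⟩ := P.extMk_surjective (Q.extMk f (n + 2) rfl hf) (n + 2) rfl
    obtain ⟨α, hα⟩ := exists_representsExt_of_d_comp_eq_zero (A := A) hp
    refine (H α).imp fun j hj => ?_
    rwa [← mk₀_comp_injectiveResolution_extMk_eq_zero_iff Q hf, ← hpf, ← hα.map_eq_zero_iff]
  · intro H α
    obtain ⟨p, hp, hα⟩ := exists_representsExt P α
    obtain ⟨f, hf, hfp⟩ := Q.extMk_surjective (P.extMk p (n + 2) rfl hp) (n + 2) rfl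
    refine (H f hf).imp fun j hj => ?_
    rwa [hα.map_eq_zero_iff hp, ← hfp, mk₀_comp_injectiveResolution_extMk_eq_zero_iff]

end ExtClass

section LocalCohomology

open Limits Opposite

variable {A : Type u} [CommRing A]

open localCohomology in
lemma subsingleton_localCohomology_iff_ext (J : Ideal A) (i : ℕ) (Y : ModuleCat.{u} A) :
    Subsingleton ((localCohomology J i).obj Y) ↔
    ∀ n : ℕ, ∀ α : ((Ext A (ModuleCat.{u} A) i).obj (op (.of A (A ⧸ J ^ n)))).obj Y,
      ∃ m : {m : ℕ // n ≤ m}, ((Ext A (ModuleCat.{u} A) i).map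
        (ModuleCat.ofHom (Submodule.factor (Ideal.pow_le_pow_right m.2))).op).app Y α = 0 := by
  let F := diagram (idealPowersDiagram J) i ⋙ (evaluation _ _).obj Y
  have : PreservesFilteredColimitsOfSize.{0, 0} (forget (ModuleCat.{u} A)) :=
    preservesFilteredColimitsOfSize_shrink.{0, u, 0, u} _
  let e : (localCohomology J i).obj Y ≅ colimit F :=
    colimitObjIsoColimitCompEvaluation (diagram (idealPowersDiagram J) i) Y
  rw [e.toLinearEquiv.toEquiv.subsingleton_congr]
  constructor
  · intro hs n α
    obtain ⟨k, f, g, hfg⟩ := Concrete.colimit_exists_of_rep_eq F (i := op (op n)) α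
      (0 : F.obj (op (op n))) (Subsingleton.elim _ _)
    exact ⟨⟨k.unop.unop, f.unop.unop.le⟩, hfg.trans (map_zero _)⟩
  · refine fun H => subsingleton_of_forall_eq 0 fun a => ?_
    obtain ⟨n, α, rfl⟩ := Concrete.colimit_exists_rep F a
    obtain ⟨m, hm⟩ := H n.unop.unop α
    let f : n ⟶ op (op m.1) := (homOfLE m.2).op.op
    have hf : F.map f α = 0 := hm
    rw [← colimit.w F f, ModuleCat.comp_apply, hf, map_zero]

lemma exists_linearMap_quotient_pow {J : Ideal A} {N : Type*} [AddCommGroup N] [Module A N]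
    {n : ℕ} {e : N} (he : J ^ n ≤ Ideal.torsionOf A N e) :
    ∃ k : (A ⧸ J ^ n) →ₗ[A] N, k (Submodule.Quotient.mk 1) = e :=
  ⟨(J ^ n).liftQ (LinearMap.toSpanSingleton A N e) he,
    (Submodule.liftQ_apply _ _ _).trans (one_smul A e)⟩

lemma subsingleton_localCohomology_succ_iff [IsNoetherianRing A] {Y : ModuleCat.{u} A}
    (Q : InjectiveResolution Y) (J : Ideal A) (i : ℕ) :
    Subsingleton ((localCohomology J (i + 1)).obj Y) ↔
      PowTorsionExact J (Q.cocomplex.d i (i + 1)).hom (Q.cocomplex.d (i + 1) (i + 2)).hom := by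
  have hJ {E : Type u} [AddCommGroup E] [Module A E] {e : E} (he : e ∈ powTorsion J E) :
      ∃ n, J ^ n ≤ Ideal.torsionOf A E e :=
    Ideal.exists_pow_le_of_le_radical_of_fg he (IsNoetherian.noetherian J)
  simp only [subsingleton_localCohomology_iff_ext, forall_exists_ext_map_eq_zero_iff Q]
  constructor
  · intro H z hz hdz
    obtain ⟨n, hn⟩ := hJ hz
    obtain ⟨f, rfl⟩ := exists_linearMap_quotient_pow hn
    obtain ⟨m, k, hk⟩ := H n (ModuleCat.ofHom f) <| ModuleCat.hom_ext <|
      Submodule.linearMap_qext _ (LinearMap.ext_ring hdz)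
    exact ⟨k.hom (Submodule.Quotient.mk 1), map_quotient_pow_mem_powTorsion k.hom _,
      congr($hk (Submodule.Quotient.mk 1))⟩
  · intro H n f hf
    obtain ⟨w, hw, hdw⟩ := H (f.hom (Submodule.Quotient.mk 1))
      (map_quotient_pow_mem_powTorsion f.hom _) congr($hf (Submodule.Quotient.mk 1))
    obtain ⟨m, hm⟩ := hJ hw
    obtain ⟨k, rfl⟩ := exists_linearMap_quotient_pow
      ((Ideal.pow_le_pow_right (le_max_right n m)).trans hm)
    exact ⟨⟨max n m, le_max_left n m⟩, ModuleCat.ofHom k, ModuleCat.hom_ext <|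
      Submodule.linearMap_qext _ (LinearMap.ext_ring hdw)⟩

end LocalCohomology

section LocalCohomologyVanishing

variable {A : Type u} [CommRing A] [IsNoetherianRing A] (Y : ModuleCat.{u} A)

lemma subsingleton_localCohomology_succ_ofList (rs : List A) {i : ℕ} (hi : rs.length ≤ i) :
    Subsingleton ((localCohomology (Ideal.ofList rs) (i + 1)).obj Y) :=
  let Q := injectiveResolution Y
  (subsingleton_localCohomology_succ_iff Q _ i).2 (powTorsionExact_ofList Q rs hi)

lemma subsingleton_localCohomology_succ_congr {J K : Ideal A}
    (h : (J ⊔ Module.annihilator A Y).radical = (K ⊔ Module.annihilator A Y).radical) (i : ℕ) :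
    Subsingleton ((localCohomology J (i + 1)).obj Y) ↔
      Subsingleton ((localCohomology K (i + 1)).obj Y) := by
  let Q := injectiveResolution Y
  rw [subsingleton_localCohomology_succ_iff Q, subsingleton_localCohomology_succ_iff Q,
    ← powTorsionExact_sup_iff_of_le_annihilator Q le_rfl J,
    ← powTorsionExact_sup_iff_of_le_annihilator Q le_rfl K,
    powTorsionExact_congr_radical h]

lemma subsingleton_localCohomology_sup_iff {a b : Ideal A} {i : ℕ}
    (h₁ : Subsingleton ((localCohomology (a ⊓ b) (i + 1)).obj Y))
    (h₂ : Subsingleton ((localCohomology (a ⊓ b) (i + 2)).obj Y)) :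
    Subsingleton ((localCohomology (a ⊔ b) (i + 2)).obj Y) ↔
      Subsingleton ((localCohomology a (i + 2)).obj Y) ∧
        Subsingleton ((localCohomology b (i + 2)).obj Y) := by
  let Q := injectiveResolution Y
  simp only [subsingleton_localCohomology_succ_iff Q] at h₁ h₂ ⊢
  exact powTorsionExact_sup_iff (baer_injectiveResolution Q i) (baer_injectiveResolution Q _)
    (injectiveResolution_d_d Q _ _ _) (injectiveResolution_d_d Q _ _ _) h₁ h₂

end LocalCohomologyVanishing

section Linkage

variable {A : Type u} [CommRing A] {N : Type u} [AddCommGroup N] [Module A N]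

lemma radical_annihilator_quotient_smul_top [Module.Finite A N] (I : Ideal A) :
    (Module.annihilator A (N ⧸ I • (⊤ : Submodule A N))).radical =
      (I ⊔ Module.annihilator A N).radical := by
  rw [← PrimeSpectrum.zeroLocus_eq_iff, ← Module.support_eq_zeroLocus, Module.support_quotient,
    PrimeSpectrum.zeroLocus_sup, ← Module.support_eq_zeroLocus, Set.inter_comm]

lemma mul_le_annihilator_quotient_of_isLinkedBy {I a b : Ideal A} (h : Ideal.IsLinkedBy N I a b) :
    a * b ≤ Module.annihilator A (N ⧸ I • (⊤ : Submodule A N)) := by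
  obtain ⟨-, -, -, -, hcolon, -⟩ := h
  refine Ideal.mul_le.2 fun r hr s hs => ?_
  rw [Submodule.annihilator_quotient, Submodule.mem_colon]
  intro m _
  have hsm : s • m ∈ Submodule.modColon (I • (⊤ : Submodule A N)) a :=
    hcolon.ge (Submodule.smul_mem_smul hs Submodule.mem_top)
  simp only [Submodule.modColon, Submodule.mem_iInf] at hsm
  rw [mul_smul]
  exact hsm r hr

lemma radical_inf_sup_annihilator_of_isLinkedBy [Module.Finite A N] {I a b : Ideal A}
    (h : Ideal.IsLinkedBy N I a b) :
    (a ⊓ b ⊔ Module.annihilator A N).radical = (I ⊔ Module.annihilator A N).radical := by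
  refine le_antisymm (Ideal.radical_le_radical_iff.2 (sup_le ?_ (le_sup_right.trans
    Ideal.le_radical))) (Ideal.radical_mono (sup_le_sup_right h.2.1 _))
  calc a ⊓ b ≤ (a ⊓ b).radical := Ideal.le_radical
    _ = (a * b).radical := by rw [Ideal.radical_mul, Ideal.radical_inf]
    _ ≤ (I ⊔ Module.annihilator A N).radical :=
      (Ideal.radical_mono (mul_le_annihilator_quotient_of_isLinkedBy h)).trans
        (radical_annihilator_quotient_smul_top I).le

end Linkage

section CohDim

variable {A : Type u} [CommRing A] {N : Type u} [AddCommGroup N] [Module A N] {a b : Ideal A}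

lemma cohDim_le_iff {n : ℕ∞} : cohDim a N ≤ n ↔ ∀ i : ℕ, n < i →
    Subsingleton ((localCohomology a i).obj (ModuleCat.of A N)) := by
  simp only [cohDim, sSup_le_iff, Set.mem_ofPred_eq, forall_exists_index, and_imp,
    ← not_nontrivial_iff_subsingleton]
  exact ⟨fun h i hi hH => (h i i rfl hH).not_gt hi,
    fun h _ i hi hH => hi ▸ not_lt.1 fun hlt => h i hlt hH⟩

variable [IsNoetherianRing A]

lemma cohDim_le_length_of_radical_eq {rs : List A}
    (h : (a ⊔ Module.annihilator A N).radical =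
      (Ideal.ofList rs ⊔ Module.annihilator A N).radical) : cohDim a N ≤ rs.length := by
  refine cohDim_le_iff.2 fun i hi => ?_
  obtain ⟨i, rfl⟩ := Nat.exists_eq_succ_of_ne_zero (Nat.ne_zero_of_lt (Nat.cast_lt.1 hi))
  exact (subsingleton_localCohomology_succ_congr (.of A N) h i).2
    (subsingleton_localCohomology_succ_ofList _ rs (Nat.lt_succ_iff.1 (Nat.cast_lt.1 hi)))

lemma cohDim_sup_le_iff {n : ℕ∞} (h : cohDim (a ⊓ b) N + 1 ≤ n) :
    cohDim (a ⊔ b) N ≤ n ↔ cohDim a N ≤ n ∧ cohDim b N ≤ n := by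
  simp only [cohDim_le_iff, ← forall_and]
  refine forall₂_congr fun i hi => ?_
  have hlt : cohDim (a ⊓ b) N + 1 < i := h.trans_lt hi
  obtain ⟨j, rfl⟩ : ∃ j, i = j + 2 := Nat.exists_eq_add_of_le'
    (Nat.succ_le_of_lt (Nat.one_lt_cast.1 (le_add_self.trans_lt hlt)))
  have hlt' : cohDim (a ⊓ b) N < (j + 1 : ℕ) :=
    (ENat.add_lt_add_iff_right ENat.one_ne_top).1 hlt
  exact subsingleton_localCohomology_sup_iff _ (cohDim_le_iff.1 le_rfl _ hlt')
    (cohDim_le_iff.1 le_rfl _ (hlt'.trans (by simp)))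

end CohDim

theorem stmt4_general {A : Type u} [CommRing A] [IsNoetherianRing A] {N : Type u}
    [AddCommGroup N] [Module A N] (a b : Ideal A) {n : ℕ∞} (h : cohDim (a ⊓ b) N ≤ n)
    (hcd : n + 1 ≤ cohDim (a + b) N) :
    cohDim (a + b) N = max (max (cohDim a N) (cohDim b N)) (n + 1) := by
  rw [Ideal.add_eq_sup] at hcd ⊢
  refine eq_of_forall_ge_iff fun c => ?_
  rw [max_le_iff, max_le_iff]
  exact ⟨fun hc => ⟨(cohDim_sup_le_iff ((add_le_add_left h 1).trans (hcd.trans hc))).1 hc,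
    hcd.trans hc⟩, fun ⟨hab, hc⟩ => (cohDim_sup_le_iff ((add_le_add_left h 1).trans hc)).2 hab⟩

theorem stmt4 (a b : Ideal R) (rs : List R)
    (hreg : RingTheory.Sequence.IsRegular M rs)
    (h : Ideal.IsLinkedBy M (Ideal.ofList rs) a b)
    (hcd : (rs.length : ℕ∞) + 1 ≤ cohDim (a + b) M) :
    cohDim (a + b) M =
      max (max (cohDim a M) (cohDim b M)) ((rs.length : ℕ∞) + 1) :=
  stmt4_general a b
    (cohDim_le_length_of_radical_eq (radical_inf_sup_annihilator_of_isLinkedBy h)) hcd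
end
end

section
/- Let a be an ideal linked by I over M. Then Ass_R(M/aM) ⊆ Ass_R(M/IM). -/
/-!
If `r₁, …, rₙ` generate `b`, then `aM = IM :_M b` is the intersection of the preimages of `IM` under
the multiplications by `r₁, …, rₙ`. Each `M ⧸ (IM :_M rᵢ)` embeds into `M ⧸ IM`, and a prime
associated to a finite intersection of submodules is associated to one of them, because
`√((⨅ i, Nᵢ) : x) = ⨅ i, √(Nᵢ : x)` and a prime ideal which is a finite
intersection of ideals equals one of them.
-/

universe u

open RingTheory.Sequence CategoryTheory

noncomputable section

variable {R : Type u} [CommRing R] [IsNoetherianRing R]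
variable {M : Type u} [AddCommGroup M] [Module R M] [Module.Finite R M] [Nontrivial M]

section AssociatedPrimes

variable {A E F : Type*}

section Semiring

variable [CommSemiring A] [AddCommMonoid E] [Module A E] [AddCommMonoid F] [Module A F]

theorem comap_colon_singleton (f : E →ₗ[A] F) (N : Submodule A F) (x : E) :
    (N.comap f).colon {x} = N.colon {f x} := by
  ext r
  simp only [Submodule.mem_colon_singleton, Submodule.mem_comap, map_smul]

theorem associatedPrimes_comap_subset (f : E →ₗ[A] F) (N : Submodule A F) :
    (N.comap f).associatedPrimes ⊆ N.associatedPrimes := by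
  rintro p ⟨hp, x, hx⟩
  exact ⟨hp, f x, by rw [hx, comap_colon_singleton]⟩

theorem associatedPrimes_finset_inf_subset {ι : Type*} (s : Finset ι) (N : ι → Submodule A E) :
    (s.inf N).associatedPrimes ⊆ ⋃ i ∈ s, (N i).associatedPrimes := by
  rintro p ⟨hp, x, hx⟩
  have hp_inf : p = s.inf fun i ↦ ((N i).colon {x}).radical := by
    rw [hx, Submodule.colon_finsetInf, ← Ideal.radicalInfTopHom_apply, map_finset_inf]
    rfl
  obtain ⟨i, hi, hpi⟩ := Ideal.eq_inf_of_isPrime_inf (hp_inf ▸ hp)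
  exact Set.mem_biUnion hi ⟨hp, x, hp_inf.trans hpi.symm⟩

end Semiring

variable [CommRing A] [AddCommGroup E] [Module A E]

theorem associatedPrimes_quotient (N : Submodule A E) :
    associatedPrimes A (E ⧸ N) = N.associatedPrimes := by
  have colon_mk (x : E) : (⊥ : Submodule A (E ⧸ N)).colon {N.mkQ x} = N.colon {x} := by
    rw [← comap_colon_singleton, Submodule.comap_bot, Submodule.ker_mkQ]
  ext p
  simp only [AssociatedPrimes.mem_iff, IsAssociatedPrime, Submodule.AssociatePrimes.mem_iff,
    Submodule.isAssociatedPrime_def, N.mkQ_surjective.exists, colon_mk]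

end AssociatedPrimes

section ModColon

variable {A E : Type u} [CommRing A] [AddCommGroup E] [Module A E]

theorem mem_modColon {N : Submodule A E} {b : Ideal A} {x : E} :
    x ∈ N.modColon b ↔ ∀ r ∈ b, r • x ∈ N := by
  simp only [Submodule.modColon, Submodule.mem_iInf, Submodule.mem_comap, LinearMap.lsmul_apply]

theorem modColon_span_finset (N : Submodule A E) (s : Finset A) :
    N.modColon (Ideal.span s) = s.inf fun r ↦ N.comap (LinearMap.lsmul A E r) := by
  ext x
  have span_le_colon : Ideal.span (s : Set A) ≤ N.colon {x} ↔ ∀ r ∈ s, r • x ∈ N := by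
    simp only [Ideal.span_le, Set.subset_def, SetLike.mem_coe, Submodule.mem_colon_singleton]
  simpa only [mem_modColon, SetLike.le_def, Submodule.mem_colon_singleton,
    Submodule.mem_finsetInf, Submodule.mem_comap, LinearMap.lsmul_apply] using span_le_colon

theorem stmt8_general (N : Submodule A E) {b : Ideal A} (hb : b.FG) :
    associatedPrimes A (E ⧸ N.modColon b) ⊆ associatedPrimes A (E ⧸ N) := by
  obtain ⟨s, rfl⟩ := hb
  rw [associatedPrimes_quotient, associatedPrimes_quotient]
  calc (N.modColon (Ideal.span s)).associatedPrimes
      = (s.inf fun r ↦ N.comap (LinearMap.lsmul A E r)).associatedPrimes := by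
        rw [modColon_span_finset]
    _ ⊆ ⋃ r ∈ s, (N.comap (LinearMap.lsmul A E r)).associatedPrimes :=
        associatedPrimes_finset_inf_subset s _
    _ ⊆ N.associatedPrimes :=
        Set.iUnion₂_subset fun r _ ↦ associatedPrimes_comap_subset (LinearMap.lsmul A E r) N

end ModColon

theorem stmt8 (I a : Ideal R) (h : ∃ b, Ideal.IsLinkedBy M I a b) :
    associatedPrimes R (M ⧸ (a • (⊤ : Submodule R M))) ⊆
      associatedPrimes R (M ⧸ (I • (⊤ : Submodule R M))) := by
  obtain ⟨b, -, -, -, -, -, modColon_eq⟩ := h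
  exact modColon_eq ▸ stmt8_general (I • ⊤) (IsNoetherian.noetherian b)
end
end
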